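/- Let R be a commutative noetherian ring, C a semidualizing R-module, and M a nonzero finitely generated R-module. Assume M is G_C-perfect of grade g, that is: M admits a finite resolution 0 → G_g → ⋯ → G₁ → G₀ → M → 0 of length g by totally C-reflexive R-modules, and Ext^n_R(M, C) = 0 for all n ≠ g. Then the R-module Ext^g_R(M, C) is also G_C-perfect of grade g — it is finitely generated, admits a finite resolution of length g by totally C-reflexive R-modules, and satisfies Ext^n_R(Ext^g_R(M, C), C) = 0 for all n ≠ g — and there is an isomorphism of R-modules M ≅ Ext^g_R(Ext^g_R(M, C), C). -/

import Mathlib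

/-! **Statement 19** (Corollary 6.6(b)): duality for `G_C`-perfect modules. -/

open CategoryTheory CategoryTheory.Limits Opposite

universe u

variable (R : Type u) [CommRing R]

/-- The `R`-module `Ext^i_R(M, N)`, as an object of `ModuleCat R`. -/
noncomputable def extMod (i : ℕ) (M N : ModuleCat.{u} R) : ModuleCat.{u} R :=
  ((Ext R (ModuleCat.{u} R) i).obj (op M)).obj N

/-- An `R`-module `C` is *semidualizing* if it admits a (possibly unbounded) resolution
by finite rank free `R`-modules, the homothety map `R → Hom_R(C, C)` is an isomorphism,
and `Ext^i_R(C, C) = 0` for all `i ≥ 1`. -/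
def IsSemidualizing (C : Type u) [AddCommGroup C] [Module R C] : Prop :=
  (∃ (P : ChainComplex (ModuleCat.{u} R) ℕ) (π : P.X 0 ⟶ ModuleCat.of R C)
      (w : P.d 1 0 ≫ π = 0),
      (∀ j, Module.Finite R (P.X j) ∧ Module.Free R (P.X j)) ∧
      (∀ j, (P.augment π w).ExactAt j)) ∧
  Function.Bijective (fun r : R => r • (LinearMap.id : C →ₗ[R] C)) ∧
  (∀ i : ℕ, 1 ≤ i → IsZero (extMod R i (ModuleCat.of R C) (ModuleCat.of R C)))

/-- A finitely generated `R`-module `H` is *totally `C`-reflexive* if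
`Ext^i_R(H, C) = 0 = Ext^i_R(Hom_R(H, C), C)` for all `i ≥ 1` and the natural
biduality map `H → Hom_R(Hom_R(H, C), C)` is an isomorphism. -/
def IsTotallyCReflexive (C : Type u) [AddCommGroup C] [Module R C]
    (H : Type u) [AddCommGroup H] [Module R H] : Prop :=
  Module.Finite R H ∧
  (∀ i : ℕ, 1 ≤ i → IsZero (extMod R i (ModuleCat.of R H) (ModuleCat.of R C))) ∧
  (∀ i : ℕ, 1 ≤ i →
    IsZero (extMod R i (ModuleCat.of R (H →ₗ[R] C)) (ModuleCat.of R C))) ∧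
  Function.Bijective ((LinearMap.id : (H →ₗ[R] C) →ₗ[R] (H →ₗ[R] C)).flip)

/-- `M` admits a finite resolution `0 → G_g → ⋯ → G₁ → G₀ → M → 0` of length at most
`g` by totally `C`-reflexive `R`-modules. -/
def HasTotallyCReflexiveRes (C : Type u) [AddCommGroup C] [Module R C]
    (M : ModuleCat.{u} R) (g : ℕ) : Prop :=
  ∃ (G : ChainComplex (ModuleCat.{u} R) ℕ) (π : G.X 0 ⟶ M) (w : G.d 1 0 ≫ π = 0),
    (∀ j, j ≤ g → IsTotallyCReflexive R C (G.X j)) ∧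
    (∀ j, g < j → IsZero (G.X j)) ∧
    (∀ j, (G.augment π w).ExactAt j)

/-- `M` is `G_C`-perfect of grade `g`: it admits a finite resolution of length `g` by
totally `C`-reflexive modules, and `Ext^n_R(M, C) = 0` for all `n ≠ g`. -/
def IsGCPerfect (C : Type u) [AddCommGroup C] [Module R C]
    (M : ModuleCat.{u} R) (g : ℕ) : Prop :=
  HasTotallyCReflexiveRes R C M g ∧
  ∀ n : ℕ, n ≠ g → IsZero (extMod R n M (ModuleCat.of R C))

/-! Dualizing a resolution `0 → G_g → ⋯ → G_0 → M → 0` into `C` gives a complex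
`0 → G_0^* → ⋯ → G_g^* → Ext^g(M, C) → 0`, because the `G_i` are acyclic for `Hom(-, C)`; the
vanishing of the other `Ext^n(M, C)` says that this complex is exact, so it is a resolution of
`Ext^g(M, C)` by totally `C`-reflexive modules. By biduality its dual is the resolution we started
with, and reading off the `Ext` modules of `Ext^g(M, C)` from it gives the claim. All `Ext` modules
are computed by dimension shifting along the cokernels of the maps in these sequences. -/

section Comparison

variable {R} {𝒜 : Type*} [Category* 𝒜] [Abelian 𝒜] [Linear R 𝒜]

section Cocycles

variable [HasExt 𝒜] {X : 𝒜} (P : ProjectiveResolution X) {Y : 𝒜} (n : ℕ)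

lemma smul_extMk (r : R) {f : P.complex.X n ⟶ Y} (hf : P.complex.d (n + 1) n ≫ f = 0) :
    r • P.extMk f (n + 1) rfl hf = P.extMk (r • f) (n + 1) rfl (by simp [hf]) := by
  rw [Abelian.Ext.smul_eq_comp_mk₀, P.extMk_comp_mk₀]
  simp

/-- The linear map sending an `n`-cocycle of `Hom(P, Y)`, for a projective resolution `P` of `X`,
to its class in the Yoneda `Ext`-module `Ext^n(X, Y)`. -/
noncomputable def cocycleToExt :
    LinearMap.ker (Linear.leftComp R Y (P.complex.d (n + 1) n)) →ₗ[R] Abelian.Ext X Y n where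
  toFun z := P.extMk z.1 (n + 1) rfl z.2
  map_add' a b := (P.add_extMk _ _ (n + 1) rfl a.2 b.2).symm
  map_smul' r a := (smul_extMk P n r a.2).symm

lemma cocycleToExt_surjective : Function.Surjective (cocycleToExt (R := R) (Y := Y) P n) :=
  fun α ↦
    let ⟨f, hf, h⟩ := P.extMk_surjective α (n + 1) rfl
    ⟨⟨f, hf⟩, h⟩

lemma cocycleToExt_eq_zero_iff
    (z : LinearMap.ker (Linear.leftComp R Y (P.complex.d (n + 2) (n + 1)))) :
    cocycleToExt P (n + 1) z = 0 ↔ ∃ g, P.complex.d (n + 1) n ≫ g = z.1 :=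
  P.extMk_eq_zero_iff z.1 (n + 2) rfl z.2 n rfl

end Cocycles

variable [EnoughProjectives 𝒜] (X Y : 𝒜)

/-- The left derived functor `Ext^0(X, Y)` is `Hom(X, Y)`. -/
noncomputable def derivedExtZeroIso :
    ((Ext R 𝒜 0).obj (op X)).obj Y ≅ ModuleCat.of R (X ⟶ Y) :=
  have : PreservesLimits ((linearYoneda R 𝒜).obj Y) :=
    have : PreservesLimits ((linearYoneda R 𝒜).obj Y ⋙ forget _) :=
      inferInstanceAs (PreservesLimits (yoneda.obj Y))
    preservesLimits_of_reflects_of_preserves _ (forget _)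
  have : PreservesFiniteColimits ((linearYoneda R 𝒜).obj Y).rightOp :=
    preservesFiniteColimits_rightOp _
  (((linearYoneda R 𝒜).obj Y).rightOp.leftDerivedZeroIsoSelf.app X).unop.symm

/-- In positive degrees, the left derived functor `Ext` agrees with the Yoneda `Ext`. -/
noncomputable def derivedExtSuccEquiv [HasExt 𝒜] (n : ℕ) :
    ((Ext R 𝒜 (n + 1)).obj (op X)).obj Y ≃ₗ[R] Abelian.Ext X Y (n + 1) :=
  let P := ProjectiveResolution.of X
  let S := (P.complex.linearYonedaObj R Y).sc' n (n + 1) (n + 2)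
  let φ : LinearMap.ker S.g.hom →ₗ[R] Abelian.Ext X Y (n + 1) := cocycleToExt P (n + 1)
  have hφ : LinearMap.range S.moduleCatToCycles = LinearMap.ker φ :=
    Submodule.ext fun z ↦ (exists_congr fun _ ↦ Subtype.ext_iff).trans
      (cocycleToExt_eq_zero_iff P n z).symm
  (P.isoExt (n + 1) Y ≪≫
    ShortComplex.homologyMapIso
      ((P.complex.linearYonedaObj R Y).isoSc' n (n + 1) (n + 2) (by simp) (by simp)) ≪≫
    S.moduleCatHomologyIso).toLinearEquiv ≪≫ₗ
  Submodule.quotEquivOfEq _ _ hφ ≪≫ₗ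
  φ.quotKerEquivOfSurjective (cocycleToExt_surjective P (n + 1))

/-- The left derived functor `Ext` agrees with the Yoneda `Ext`. -/
noncomputable def derivedExtEquiv [HasExt 𝒜] :
    ∀ n : ℕ, ((Ext R 𝒜 n).obj (op X)).obj Y ≃ₗ[R] Abelian.Ext X Y n
  | 0 => (derivedExtZeroIso X Y).toLinearEquiv ≪≫ₗ Abelian.Ext.linearEquiv₀.symm
  | n + 1 => derivedExtSuccEquiv X Y n

end Comparison

section ExtModules

variable {R}

/-- `Ext^0_R(X, Y)` is the module of linear maps from `X` to `Y`. -/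
noncomputable def extModZeroEquiv (X Y : ModuleCat.{u} R) : extMod R 0 X Y ≃ₗ[R] (X →ₗ[R] Y) :=
  (derivedExtZeroIso X Y).toLinearEquiv ≪≫ₗ ModuleCat.homLinearEquiv

/-- Isomorphic modules have isomorphic `Ext`-modules. -/
noncomputable def extModMapIso (n : ℕ) {X X' : ModuleCat.{u} R} (e : X ≅ X') (Y : ModuleCat.{u} R) :
    extMod R n X Y ≅ extMod R n X' Y :=
  ((Ext R (ModuleCat.{u} R) n).mapIso e.symm.op).app Y

lemma isZero_extMod_iff_subsingleton_ext {n : ℕ} {X Y : ModuleCat.{u} R} :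
    IsZero (extMod R n X Y) ↔ Subsingleton (Abelian.Ext.{u} X Y n) :=
  ModuleCat.isZero_iff_subsingleton.trans (derivedExtEquiv X Y n).toEquiv.subsingleton_congr

lemma isZero_extMod_zero_iff {X Y : ModuleCat.{u} R} :
    IsZero (extMod R 0 X Y) ↔ Subsingleton (X →ₗ[R] Y) :=
  ModuleCat.isZero_iff_subsingleton.trans (extModZeroEquiv X Y).toEquiv.subsingleton_congr

/-- A module `X` is *`Hom(-, Y)`-acyclic* if `Ext^i_R(X, Y) = 0` for all `i ≥ 1`; resolutions by
such modules compute `Ext_R(-, Y)`. -/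
def IsHomAcyclic (X Y : ModuleCat.{u} R) : Prop :=
  ∀ i : ℕ, 1 ≤ i → IsZero (extMod R i X Y)

lemma IsHomAcyclic.of_iso {X X' Y : ModuleCat.{u} R} (h : IsHomAcyclic X Y) (e : X ≅ X') :
    IsHomAcyclic X' Y :=
  fun i hi ↦ (h i hi).of_iso (extModMapIso i e Y).symm

lemma IsHomAcyclic.of_isZero {X Y : ModuleCat.{u} R} (h : IsZero X) : IsHomAcyclic X Y := by
  rintro (_ | i) hi
  · omega
  · have := h.projective
    exact isZero_Ext_succ_of_projective X Y i

section DimensionShifting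

variable {S : ShortComplex (ModuleCat.{u} R)} (hS : S.ShortExact) {Y : ModuleCat.{u} R}

include hS in
lemma extClass_precomp_surjective {m n : ℕ} (h : 1 + m = n) (h₂ : IsZero (extMod R n S.X₂ Y)) :
    Function.Surjective (hS.extClass.precompOfLinear R Y h) := fun x ↦
  have := isZero_extMod_iff_subsingleton_ext.1 h₂
  Abelian.Ext.contravariant_sequence_exact₃ hS Y x (Subsingleton.elim _ _) h

include hS in
lemma extClass_precomp_injective {m n : ℕ} (h : 1 + m = n) (h₂ : IsZero (extMod R m S.X₂ Y)) :
    Function.Injective (hS.extClass.precompOfLinear R Y h) := by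
  have := isZero_extMod_iff_subsingleton_ext.1 h₂
  refine (injective_iff_map_eq_zero _).2 fun x hx ↦ ?_
  obtain ⟨y, rfl⟩ := Abelian.Ext.contravariant_sequence_exact₁ hS Y x h hx
  rw [Subsingleton.elim y 0, Abelian.Ext.comp_zero]

/-- Dimension shifting along a short exact sequence with `Hom(-, Y)`-acyclic middle term. -/
noncomputable def extModShiftIso (h₂ : IsHomAcyclic S.X₂ Y) (n : ℕ) :
    extMod R (n + 2) S.X₃ Y ≅ extMod R (n + 1) S.X₁ Y :=
  (derivedExtEquiv S.X₃ Y (n + 2) ≪≫ₗ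
    (LinearEquiv.ofBijective (hS.extClass.precompOfLinear R Y (add_comm 1 (n + 1)))
      ⟨extClass_precomp_injective hS _ (h₂ _ (by omega)),
        extClass_precomp_surjective hS _ (h₂ _ (by omega))⟩).symm ≪≫ₗ
    (derivedExtEquiv S.X₁ Y (n + 1)).symm).toModuleIso

variable (Y) in
/-- The connecting map `Hom(S.X₁, Y) → Ext^1(S.X₃, Y)` of a short exact sequence `S`. -/
noncomputable def homToExtOne : (S.X₁ →ₗ[R] Y) →ₗ[R] Abelian.Ext.{u} S.X₃ Y 1 :=
  hS.extClass.precompOfLinear R Y (add_zero 1) ∘ₗ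
    (ModuleCat.homLinearEquiv.symm ≪≫ₗ Abelian.Ext.linearEquiv₀.symm).toLinearMap

lemma exact_lcomp_homToExtOne :
    Function.Exact (LinearMap.lcomp R Y S.f.hom) (homToExtOne hS Y) := by
  refine fun φ ↦ ⟨fun hφ ↦ ?_, ?_⟩
  · obtain ⟨y, hy⟩ := Abelian.Ext.contravariant_sequence_exact₁ hS Y _ (add_zero 1) hφ
    obtain ⟨ψ, rfl⟩ := Abelian.Ext.linearEquiv₀ (R := R).symm.surjective y
    rw [Abelian.Ext.linearEquiv₀_symm_apply, Abelian.Ext.mk₀_comp_mk₀] at hy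
    exact ⟨ψ.hom, congrArg ModuleCat.Hom.hom (Abelian.Ext.linearEquiv₀ (R := R).symm.injective hy)⟩
  · rintro ⟨ψ, rfl⟩
    have h : Abelian.Ext.mk₀ (ModuleCat.ofHom (LinearMap.lcomp R Y S.f.hom ψ)) =
        (Abelian.Ext.mk₀ S.f).comp (Abelian.Ext.mk₀ (ModuleCat.ofHom ψ)) (zero_add 0) := by
      rw [Abelian.Ext.mk₀_comp_mk₀]
      rfl
    exact (congrArg (hS.extClass.comp · (add_zero 1)) h).trans (hS.extClass_comp_assoc _)

lemma homToExtOne_surjective (h₂ : IsZero (extMod R 1 S.X₂ Y)) :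
    Function.Surjective (homToExtOne hS Y) := by
  rw [homToExtOne, LinearMap.coe_comp]
  exact (extClass_precomp_surjective hS (add_zero 1) h₂).comp (LinearEquiv.surjective _)

/-- If the middle term of a short exact sequence `S` is acyclic, then `Ext^1(S.X₃, Y)` is the
cokernel of the restriction map `Hom(S.X₂, Y) → Hom(S.X₁, Y)`. -/
noncomputable def extModOneEquiv (h₂ : IsHomAcyclic S.X₂ Y) :
    extMod R 1 S.X₃ Y ≃ₗ[R]
      (S.X₁ →ₗ[R] Y) ⧸ LinearMap.range (LinearMap.lcomp R Y S.f.hom) :=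
  derivedExtEquiv S.X₃ Y 1 ≪≫ₗ
    ((exact_lcomp_homToExtOne hS).linearEquivOfSurjective
      (homToExtOne_surjective hS (h₂ 1 le_rfl))).symm

include hS in
lemma isZero_extMod_one_iff (h₂ : IsHomAcyclic S.X₂ Y) :
    IsZero (extMod R 1 S.X₃ Y) ↔ Function.Surjective (LinearMap.lcomp R Y S.f.hom) := by
  rw [ModuleCat.isZero_iff_subsingleton, (extModOneEquiv hS h₂).toEquiv.subsingleton_congr,
    Submodule.Quotient.subsingleton_iff, LinearMap.range_eq_top]

end DimensionShifting

end ExtModules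

section Cokernels

variable {R}

/-- The cokernel `B ⧸ f(A)` of a linear map `f : A → B`, as an object of `ModuleCat R`. -/
abbrev moduleCoker {A B : Type u} [AddCommGroup A] [Module R A] [AddCommGroup B] [Module R B]
    (f : A →ₗ[R] B) : ModuleCat.{u} R :=
  ModuleCat.of R (B ⧸ LinearMap.range f)

variable {A B D : Type u} [AddCommGroup A] [Module R A] [AddCommGroup B] [Module R B]
  [AddCommGroup D] [Module R D] {e : A →ₗ[R] B} {f : B →ₗ[R] D}

/-- The short complex `B → D → coker f` attached to a linear map `f : B → D`. -/
abbrev cokerShortComplex (f : B →ₗ[R] D) : ShortComplex (ModuleCat.{u} R) :=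
  ModuleCat.shortComplexOfCompEqZero f (LinearMap.range f).mkQ
    f.exact_map_mkQ_range.linearMap_comp_eq_zero

lemma cokerShortComplex_shortExact (hf : Function.Injective f) :
    (cokerShortComplex f).ShortExact :=
  ModuleCat.shortComplex_shortExact _ f.exact_map_mkQ_range hf (Submodule.mkQ_surjective _)

/-- In an exact sequence `A → B → D`, the map `coker e → D` induced by `f`. -/
def cokerDesc (h : Function.Exact e f) : moduleCoker e →ₗ[R] D :=
  (LinearMap.range e).liftQ f h.linearMap_ker_eq.ge

lemma cokerDesc_injective (h : Function.Exact e f) : Function.Injective (cokerDesc h) :=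
  LinearMap.ker_eq_bot.1 (Submodule.ker_liftQ_eq_bot' _ _ h.linearMap_ker_eq.symm)

/-- In an exact sequence `A → B → D`, the maps `B → D` and `coker e → D` have the same
cokernel. -/
noncomputable def cokerDescIso (h : Function.Exact e f) :
    moduleCoker f ≅ moduleCoker (cokerDesc h) :=
  (Submodule.quotEquivOfEq _ _ (Submodule.range_liftQ _ _ _).symm).toModuleIso

variable {Y : ModuleCat.{u} R}

lemma surjective_lcomp_cokerDesc_iff (h : Function.Exact e f) :
    Function.Surjective (LinearMap.lcomp R Y (cokerDesc h)) ↔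
      Function.Exact (LinearMap.lcomp R Y f) (LinearMap.lcomp R Y e) := by
  have hker := (LinearMap.exact_lcomp_of_exact_of_surjective Y e.exact_map_mkQ_range
    (Submodule.mkQ_surjective _)).linearMap_ker_eq
  have hf : LinearMap.lcomp R Y f =
      LinearMap.lcomp R Y (LinearMap.range e).mkQ ∘ₗ LinearMap.lcomp R Y (cokerDesc h) :=
    rfl
  have hinj : Function.Injective (LinearMap.lcomp R Y (LinearMap.range e).mkQ) :=
    LinearMap.lcomp_injective_of_surjective _ (Submodule.mkQ_surjective _)
  rw [LinearMap.exact_iff, hker, hf, LinearMap.range_comp,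
    LinearMap.range_eq_map (LinearMap.lcomp R Y (LinearMap.range e).mkQ), eq_comm,
    (Submodule.map_injective_of_injective hinj).eq_iff, LinearMap.range_eq_top]

/-- Dimension shifting along an exact sequence `A → B → D` with `Hom(-, Y)`-acyclic `D`. -/
noncomputable def extModCokerShiftIso (h : Function.Exact e f)
    (hD : IsHomAcyclic (ModuleCat.of R D) Y) (n : ℕ) :
    extMod R (n + 2) (moduleCoker f) Y ≅ extMod R (n + 1) (moduleCoker e) Y :=
  extModMapIso (n + 2) (cokerDescIso h) Y ≪≫
    extModShiftIso (cokerShortComplex_shortExact (cokerDesc_injective h)) hD n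

lemma isZero_extMod_one_coker_iff (h : Function.Exact e f)
    (hD : IsHomAcyclic (ModuleCat.of R D) Y) :
    IsZero (extMod R 1 (moduleCoker f) Y) ↔
      Function.Exact (LinearMap.lcomp R Y f) (LinearMap.lcomp R Y e) :=
  (extModMapIso 1 (cokerDescIso h) Y).isZero_iff.trans <|
    (isZero_extMod_one_iff (cokerShortComplex_shortExact (cokerDesc_injective h)) hD).trans <|
      surjective_lcomp_cokerDesc_iff h

lemma isZero_extMod_zero_coker_iff :
    IsZero (extMod R 0 (moduleCoker f) Y) ↔ Function.Injective (LinearMap.lcomp R Y f) := by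
  have hker := (LinearMap.exact_lcomp_of_exact_of_surjective Y f.exact_map_mkQ_range
    (Submodule.mkQ_surjective _)).linearMap_ker_eq
  have hinj : Function.Injective (LinearMap.lcomp R Y (LinearMap.range f).mkQ) :=
    LinearMap.lcomp_injective_of_surjective _ (Submodule.mkQ_surjective _)
  rw [isZero_extMod_zero_iff, ← LinearMap.ker_eq_bot, hker, ← Submodule.subsingleton_iff_eq_bot]
  exact (LinearEquiv.ofInjective _ hinj).toEquiv.subsingleton_congr

/-- For injective `f : B → D` with `Hom(-, Y)`-acyclic `D`, the module `Ext^1(coker f, Y)` is the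
cokernel of the dual map `Hom(D, Y) → Hom(B, Y)`. -/
noncomputable def extModOneCokerIso (hf : Function.Injective f)
    (hD : IsHomAcyclic (ModuleCat.of R D) Y) :
    extMod R 1 (moduleCoker f) Y ≅ moduleCoker (LinearMap.lcomp R Y f) :=
  (extModOneEquiv (cokerShortComplex_shortExact hf) hD).toModuleIso

end Cokernels

section AcyclicSequences

variable {R} {Y : ModuleCat.{u} R}

/-- Iterated dimension shifting along an exact sequence `⋯ → X 2 → X 1 → X 0` of
`Hom(-, Y)`-acyclic modules. -/
noncomputable def extModCokerZeroIso {X : ℕ → ModuleCat.{u} R}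
    (hX : ∀ n, IsHomAcyclic (X n) Y) {d : ∀ n, X (n + 1) →ₗ[R] X n}
    (hd : ∀ n, Function.Exact (d (n + 1)) (d n)) :
    ∀ k : ℕ, extMod R (k + 1) (moduleCoker (d 0)) Y ≅ extMod R 1 (moduleCoker (d k)) Y
  | 0 => Iso.refl _
  | k + 1 => extModCokerShiftIso (hd 0) (hX 0) k ≪≫
      extModCokerZeroIso (fun n ↦ hX (n + 1)) (fun n ↦ hd (n + 1)) k

variable {X : ℕ → ModuleCat.{u} R} (hX : ∀ n, IsHomAcyclic (X n) Y)

include hX in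
lemma exact_lcomp_of_isZero_extMod {d : ∀ n, X (n + 1) →ₗ[R] X n}
    (hd : ∀ n, Function.Exact (d (n + 1)) (d n)) {k : ℕ}
    (h : IsZero (extMod R (k + 1) (moduleCoker (d 0)) Y)) :
    Function.Exact (LinearMap.lcomp R Y (d k)) (LinearMap.lcomp R Y (d (k + 1))) :=
  (isZero_extMod_one_coker_iff (hd k) (hX k)).1 (h.of_iso (extModCokerZeroIso hX hd k).symm)

variable {δ : ∀ n, X n →ₗ[R] X (n + 1)} (h₀ : Function.Injective (δ 0))

/-- Iterated dimension shifting along an exact sequence `X 0 → X 1 → ⋯ → X (k + 1)` of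
`Hom(-, Y)`-acyclic modules. -/
noncomputable def extModCokerCoresolutionIso :
    ∀ k : ℕ, (∀ j < k, Function.Exact (δ j) (δ (j + 1))) →
      (extMod R (k + 1) (moduleCoker (δ k)) Y ≅ extMod R 1 (moduleCoker (δ 0)) Y)
  | 0, _ => Iso.refl _
  | k + 1, hδ => extModCokerShiftIso (hδ k k.lt_succ_self) (hX _) k ≪≫
      extModCokerCoresolutionIso k fun j hj ↦ hδ j (hj.trans k.lt_succ_self)

include hX h₀ in
lemma isZero_extMod_coker :
    ∀ {k : ℕ}, (∀ j < k, Function.Exact (δ j) (δ (j + 1))) →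
      (∀ j < k, Function.Exact (LinearMap.lcomp R Y (δ (j + 1))) (LinearMap.lcomp R Y (δ j))) →
      ∀ {n : ℕ}, n ≠ k → IsZero (extMod R (n + 1) (moduleCoker (δ k)) Y)
  | 0, _, _, 0, hn => absurd rfl hn
  | 0, _, _, n + 1, _ =>
    (hX 0 (n + 1) (by omega)).of_iso (extModShiftIso (cokerShortComplex_shortExact h₀) (hX 1) n)
  | k + 1, hδ, hδ', 0, _ =>
    (isZero_extMod_one_coker_iff (hδ k k.lt_succ_self) (hX _)).2 (hδ' k k.lt_succ_self)
  | k + 1, hδ, hδ', n + 1, hn =>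
    (isZero_extMod_coker (fun j hj ↦ hδ j (hj.trans k.lt_succ_self))
      (fun j hj ↦ hδ' j (hj.trans k.lt_succ_self)) (by omega)).of_iso
        (extModCokerShiftIso (hδ k k.lt_succ_self) (hX _) n)

end AcyclicSequences

section TotallyReflexive

variable {R} {C : Type u} [AddCommGroup C] [Module R C] {G H : Type u} [AddCommGroup G] [Module R G]
  [AddCommGroup H] [Module R H]

lemma IsTotallyCReflexive.isHomAcyclic (h : IsTotallyCReflexive R C G) :
    IsHomAcyclic (ModuleCat.of R G) (ModuleCat.of R C) :=
  h.2.1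

lemma IsTotallyCReflexive.isHomAcyclic_dual (h : IsTotallyCReflexive R C G) :
    IsHomAcyclic (ModuleCat.of R (G →ₗ[R] C)) (ModuleCat.of R C) :=
  h.2.2.1

/-- The biduality isomorphism of a totally `C`-reflexive module. -/
noncomputable def IsTotallyCReflexive.evalEquiv (h : IsTotallyCReflexive R C G) :
    G ≃ₗ[R] ((G →ₗ[R] C) →ₗ[R] C) :=
  LinearEquiv.ofBijective _ h.2.2.2

lemma IsTotallyCReflexive.lcomp_lcomp_comp_evalEquiv (hG : IsTotallyCReflexive R C G)
    (hH : IsTotallyCReflexive R C H) (f : G →ₗ[R] H) :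
    LinearMap.lcomp R C (LinearMap.lcomp R C f) ∘ₗ hG.evalEquiv.toLinearMap =
      hH.evalEquiv.toLinearMap ∘ₗ f :=
  rfl

lemma IsTotallyCReflexive.of_equiv (h : IsTotallyCReflexive R C G) (e : G ≃ₗ[R] H) :
    IsTotallyCReflexive R C H := by
  have := h.1
  let e' : (G →ₗ[R] C) ≃ₗ[R] (H →ₗ[R] C) := e.congrLeft C R
  refine ⟨Module.Finite.equiv e, h.isHomAcyclic.of_iso e.toModuleIso,
    h.isHomAcyclic_dual.of_iso e'.toModuleIso, ?_⟩
  have heval : (LinearMap.id : (H →ₗ[R] C) →ₗ[R] (H →ₗ[R] C)).flip =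
      (e.symm ≪≫ₗ h.evalEquiv ≪≫ₗ e'.congrLeft C R).toLinearMap := by
    ext x φ
    exact congrArg φ (e.apply_symm_apply x).symm
  rw [heval]
  exact LinearEquiv.bijective _

lemma IsTotallyCReflexive.dual [IsNoetherian R C] (h : IsTotallyCReflexive R C G) :
    IsTotallyCReflexive R C (G →ₗ[R] C) := by
  have := h.1
  refine ⟨inferInstance, h.isHomAcyclic_dual,
    h.isHomAcyclic.of_iso h.evalEquiv.toModuleIso, ?_⟩
  have heval : (LinearMap.id : ((G →ₗ[R] C) →ₗ[R] C) →ₗ[R] _).flip =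
      (h.evalEquiv.congrLeft C R).toLinearMap := by
    ext φ ψ
    obtain ⟨x, rfl⟩ := h.evalEquiv.surjective ψ
    exact congrArg φ (h.evalEquiv.symm_apply_apply x).symm
  rw [heval]
  exact LinearEquiv.bijective _

lemma isTotallyCReflexive_of_subsingleton [Subsingleton G] : IsTotallyCReflexive R C G :=
  ⟨inferInstance, IsHomAcyclic.of_isZero (ModuleCat.isZero_of_subsingleton _),
    IsHomAcyclic.of_isZero (ModuleCat.isZero_of_subsingleton _),
    Function.injective_of_subsingleton _, fun _ ↦ ⟨0, Subsingleton.elim _ _⟩⟩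

lemma IsTotallyCReflexive.injective_lcomp_lcomp (hG : IsTotallyCReflexive R C G)
    (hH : IsTotallyCReflexive R C H) {f : G →ₗ[R] H} (hf : Function.Injective f) :
    Function.Injective (LinearMap.lcomp R C (LinearMap.lcomp R C f)) :=
  (hG.evalEquiv.toEquiv.injective_comp _).1 (hH.evalEquiv.injective.comp hf)

lemma IsTotallyCReflexive.exact_lcomp_lcomp {K : Type u} [AddCommGroup K] [Module R K]
    (hG : IsTotallyCReflexive R C G) (hH : IsTotallyCReflexive R C H)
    (hK : IsTotallyCReflexive R C K) {f : G →ₗ[R] H} {g : H →ₗ[R] K} (h : Function.Exact f g) :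
    Function.Exact (LinearMap.lcomp R C (LinearMap.lcomp R C f))
      (LinearMap.lcomp R C (LinearMap.lcomp R C g)) :=
  h.of_ladder_linearEquiv_of_exact (hG.lcomp_lcomp_comp_evalEquiv hH f)
    (hH.lcomp_lcomp_comp_evalEquiv hK g)

/-- A linear map between totally `C`-reflexive modules and its bidual have the same cokernel. -/
noncomputable def IsTotallyCReflexive.cokerEquivBidual (hG : IsTotallyCReflexive R C G)
    (hH : IsTotallyCReflexive R C H) (f : G →ₗ[R] H) :
    moduleCoker f ≃ₗ[R] moduleCoker (LinearMap.lcomp R C (LinearMap.lcomp R C f)) :=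
  Submodule.Quotient.equiv _ _ hH.evalEquiv <| by
    rw [← LinearMap.range_comp, ← hG.lcomp_lcomp_comp_evalEquiv hH f,
      LinearEquiv.range_comp]

end TotallyReflexive

section Resolutions

variable {R} {C : Type u} [AddCommGroup C] [Module R C] {M N : ModuleCat.{u} R} {n : ℕ}

lemma injective_of_exact_of_subsingleton {A B D : Type*} [AddCommGroup A] [Module R A]
    [AddCommGroup B] [Module R B] [AddCommGroup D] [Module R D] [Subsingleton A] {e : A →ₗ[R] B}
    {f : B →ₗ[R] D} (h : Function.Exact e f) : Function.Injective f := by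
  rwa [Subsingleton.elim e 0, LinearMap.exact_zero_iff_injective] at h

lemma forall_exactAt_augment_iff {G : ChainComplex (ModuleCat.{u} R) ℕ} {π : G.X 0 ⟶ M}
    {w : G.d 1 0 ≫ π = 0} :
    (∀ j, (G.augment π w).ExactAt j) ↔
      Function.Surjective π.hom ∧ Function.Exact (G.d 1 0).hom π.hom ∧
        ∀ i, Function.Exact (G.d (i + 2) (i + 1)).hom (G.d (i + 1) i).hom := by
  have exactAt_succ_iff (j : ℕ) : (G.augment π w).ExactAt (j + 1) ↔
      Function.Exact ((G.augment π w).d (j + 2) (j + 1)).hom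
        ((G.augment π w).d (j + 1) j).hom := by
    rw [HomologicalComplex.exactAt_iff' _ (j + 2) (j + 1) j (by simp) (by simp)]
    exact ShortComplex.ShortExact.moduleCat_exact_iff_function_exact _
  have exactAt_zero_iff : (G.augment π w).ExactAt 0 ↔ Function.Surjective π.hom := by
    rw [HomologicalComplex.exactAt_iff' _ 1 0 0 (by simp) (by simp),
      ShortComplex.exact_iff_epi _ ((G.augment π w).shape 0 0 (by simp)),
      ModuleCat.epi_iff_surjective]
    rfl
  refine ⟨fun h ↦ ⟨exactAt_zero_iff.1 (h 0), (exactAt_succ_iff 0).1 (h 1),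
    fun i ↦ (exactAt_succ_iff (i + 1)).1 (h (i + 2))⟩, ?_⟩
  rintro ⟨h₀, h₁, h₂⟩ (_ | _ | j)
  exacts [exactAt_zero_iff.2 h₀, (exactAt_succ_iff 0).2 h₁, (exactAt_succ_iff (j + 1)).2 (h₂ j)]

lemma IsSemidualizing.finite (hC : IsSemidualizing R C) : Module.Finite R C := by
  obtain ⟨⟨P, π, w, hP, hex⟩, -⟩ := hC
  have := (hP 0).1
  exact Module.Finite.of_surjective π.hom (forall_exactAt_augment_iff.1 hex).1

lemma HasTotallyCReflexiveRes.finite (h : HasTotallyCReflexiveRes R C M n) :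
    Module.Finite R M := by
  obtain ⟨G, π, w, hG, -, hex⟩ := h
  have := (hG 0 n.zero_le).1
  exact Module.Finite.of_surjective π.hom (forall_exactAt_augment_iff.1 hex).1

lemma HasTotallyCReflexiveRes.of_iso (h : HasTotallyCReflexiveRes R C M n) (e : M ≅ N) :
    HasTotallyCReflexiveRes R C N n := by
  obtain ⟨G, π, w, hG, hG₀, hex⟩ := h
  obtain ⟨hπ, h₁, h₂⟩ := forall_exactAt_augment_iff.1 hex
  refine ⟨G, π ≫ e.hom, by rw [reassoc_of% w, zero_comp], hG, hG₀,
    forall_exactAt_augment_iff.2 ⟨e.toLinearEquiv.surjective.comp hπ, ?_, h₂⟩⟩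
  exact e.toLinearEquiv.injective.comp_exact_iff_exact.2 h₁

lemma IsTotallyCReflexive.hasTotallyCReflexiveRes (h : IsTotallyCReflexive R C M) :
    HasTotallyCReflexiveRes R C M 0 := by
  let G := (ChainComplex.single₀ (ModuleCat.{u} R)).obj M
  have hG₀ (j : ℕ) : IsZero (G.X (j + 1)) :=
    HomologicalComplex.isZero_single_obj_X _ _ _ _ (by simp)
  have (j : ℕ) : Subsingleton (G.X (j + 1)) := ModuleCat.isZero_iff_subsingleton.1 (hG₀ j)
  refine ⟨G, 𝟙 M, (hG₀ 0).eq_of_src _ _, ?_, ?_, forall_exactAt_augment_iff.2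
    ⟨Function.surjective_id, ?_, fun i x ↦ ?_⟩⟩
  · rintro j hj
    obtain rfl : j = 0 := by omega
    exact h
  · rintro (_ | j) hj
    exacts [absurd hj (by omega), hG₀ j]
  · rw [(hG₀ 0).eq_of_src (G.d 1 0) 0]
    exact (LinearMap.exact_zero_iff_injective (G.X 1) LinearMap.id).2 Function.injective_id
  · rw [Subsingleton.elim x 0]
    exact iff_of_true (map_zero _) ⟨0, map_zero _⟩

lemma HasTotallyCReflexiveRes.isTotallyCReflexive (h : HasTotallyCReflexiveRes R C M 0) :
    IsTotallyCReflexive R C M := by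
  obtain ⟨G, π, w, hG, hG₀, hex⟩ := h
  obtain ⟨hπ, hex₀, -⟩ := forall_exactAt_augment_iff.1 hex
  have := ModuleCat.isZero_iff_subsingleton.1 (hG₀ 1 one_pos)
  exact (hG 0 le_rfl).of_equiv
    (LinearEquiv.ofBijective π.hom ⟨injective_of_exact_of_subsingleton hex₀, hπ⟩)

lemma HasTotallyCReflexiveRes.of_shortExact {S : ShortComplex (ModuleCat.{u} R)}
    (hS : S.ShortExact) (h₂ : IsTotallyCReflexive R C S.X₂)
    (h₁ : HasTotallyCReflexiveRes R C S.X₁ n) : HasTotallyCReflexiveRes R C S.X₃ (n + 1) := by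
  obtain ⟨G, π, w, hG, hG₀, hex⟩ := h₁
  obtain ⟨hπ, hex₀, hex'⟩ := forall_exactAt_augment_iff.1 hex
  have hw : (π ≫ S.f) ≫ S.g = 0 := by rw [Category.assoc, S.zero, comp_zero]
  refine ⟨G.augment (π ≫ S.f) (by rw [reassoc_of% w, zero_comp]), S.g, hw, ?_, ?_, ?_⟩
  · rintro (_ | j) hj
    exacts [h₂, hG j (by omega)]
  · rintro (_ | j) hj
    exacts [absurd hj (by omega), hG₀ j (by omega)]
  · refine forall_exactAt_augment_iff.2 ⟨hS.moduleCat_surjective_g, ?_, ?_⟩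
    · exact (hπ.comp_exact_iff_exact (f := S.f.hom) (g := S.g.hom)).2
        ((ShortComplex.ShortExact.moduleCat_exact_iff_function_exact _).1 hS.exact)
    · rintro (_ | i)
      exacts [hS.moduleCat_injective_f.comp_exact_iff_exact.2 hex₀, hex' i]

lemma hasTotallyCReflexiveRes_coker {X : ℕ → ModuleCat.{u} R}
    (hX : ∀ n, IsTotallyCReflexive R C (X n)) {δ : ∀ n, X n →ₗ[R] X (n + 1)}
    (h₀ : Function.Injective (δ 0)) :
    ∀ {k : ℕ}, (∀ j < k, Function.Exact (δ j) (δ (j + 1))) →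
      HasTotallyCReflexiveRes R C (moduleCoker (δ k)) (k + 1)
  | 0, _ => .of_shortExact (cokerShortComplex_shortExact h₀) (hX 1)
      (hX 0).hasTotallyCReflexiveRes
  | k + 1, hδ =>
    (HasTotallyCReflexiveRes.of_shortExact
      (cokerShortComplex_shortExact (cokerDesc_injective (hδ k k.lt_succ_self))) (hX _)
      (hasTotallyCReflexiveRes_coker hX h₀ fun j hj ↦ hδ j (hj.trans k.lt_succ_self))).of_iso
        (cokerDescIso _).symm

lemma HasTotallyCReflexiveRes.exists_iso_coker {k : ℕ}
    (h : HasTotallyCReflexiveRes R C M (k + 1)) :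
    ∃ (X : ℕ → ModuleCat.{u} R) (d : ∀ n, X (n + 1) →ₗ[R] X n),
      (∀ n, IsTotallyCReflexive R C (X n)) ∧ (∀ n, Function.Exact (d (n + 1)) (d n)) ∧
        Function.Injective (d k) ∧ Nonempty (moduleCoker (d 0) ≅ M) := by
  obtain ⟨G, π, w, hG, hG₀, hex⟩ := h
  obtain ⟨hπ, hex₀, hd⟩ := forall_exactAt_augment_iff.1 hex
  have hsub (n : ℕ) (hn : k + 1 < n) : Subsingleton (G.X n) :=
    ModuleCat.isZero_iff_subsingleton.1 (hG₀ n hn)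
  refine ⟨G.X, fun n ↦ (G.d (n + 1) n).hom, fun n ↦ ?_, hd, ?_,
    ⟨(hex₀.linearEquivOfSurjective hπ).toModuleIso⟩⟩
  · rcases le_or_gt n (k + 1) with hn | hn
    · exact hG n hn
    · have := hsub n hn
      exact isTotallyCReflexive_of_subsingleton
  · have := hsub (k + 2) (by omega)
    exact injective_of_exact_of_subsingleton (hd k)

end Resolutions

section Duality

variable {R} {C : Type u} [AddCommGroup C] [Module R C]

lemma isGCPerfect_zero_iff {M : ModuleCat.{u} R} :
    IsGCPerfect R C M 0 ↔ IsTotallyCReflexive R C M :=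
  ⟨fun h ↦ h.1.isTotallyCReflexive,
    fun h ↦ ⟨h.hasTotallyCReflexiveRes, fun n hn ↦ h.isHomAcyclic n (by omega)⟩⟩

lemma IsGCPerfect.of_iso {M N : ModuleCat.{u} R} {g : ℕ} (h : IsGCPerfect R C M g) (e : M ≅ N) :
    IsGCPerfect R C N g :=
  ⟨h.1.of_iso e, fun n hn ↦ (h.2 n hn).of_iso (extModMapIso n e _).symm⟩

section Coresolution

variable {X : ℕ → ModuleCat.{u} R} (hX : ∀ n, IsTotallyCReflexive R C (X n))
  {δ : ∀ n, X n →ₗ[R] X (n + 1)} (h₀ : Function.Injective (δ 0)) {k : ℕ}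
  (hδ : ∀ j < k, Function.Exact (δ j) (δ (j + 1)))

include hX h₀ hδ in
lemma isGCPerfect_coker (hk : Function.Injective (LinearMap.lcomp R C (δ k)))
    (hδ' : ∀ j < k, Function.Exact (LinearMap.lcomp R C (δ (j + 1))) (LinearMap.lcomp R C (δ j))) :
    IsGCPerfect R C (moduleCoker (δ k)) (k + 1) := by
  refine ⟨hasTotallyCReflexiveRes_coker hX h₀ hδ, ?_⟩
  rintro (_ | n) hn
  · exact isZero_extMod_zero_coker_iff.2 hk
  · exact isZero_extMod_coker (fun n ↦ (hX n).isHomAcyclic) h₀ hδ hδ' (by omega)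

/-- For an exact sequence `0 → X 0 → ⋯ → X (k + 1)` of totally `C`-reflexive modules, the top
`Ext` of the last cokernel is the cokernel of the dual of `X 0 → X 1`. -/
noncomputable def extModCokerIso :
    extMod R (k + 1) (moduleCoker (δ k)) (ModuleCat.of R C) ≅
      moduleCoker (LinearMap.lcomp R C (δ 0)) :=
  extModCokerCoresolutionIso (fun n ↦ (hX n).isHomAcyclic) k hδ ≪≫
    extModOneCokerIso h₀ (hX 1).isHomAcyclic

end Coresolution

theorem IsTotallyCReflexive.extMod_zero_and_nonempty_iso [IsNoetherian R C] {M : ModuleCat.{u} R}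
    (h : IsTotallyCReflexive R C M) :
    IsTotallyCReflexive R C (extMod R 0 M (ModuleCat.of R C)) ∧
      Nonempty (M ≅ extMod R 0 (extMod R 0 M (ModuleCat.of R C)) (ModuleCat.of R C)) :=
  let e := extModZeroEquiv M (ModuleCat.of R C)
  ⟨h.dual.of_equiv e.symm, ⟨h.evalEquiv.toModuleIso ≪≫
    (extModZeroEquiv (ModuleCat.of R (M →ₗ[R] C)) (ModuleCat.of R C)).symm.toModuleIso ≪≫
    extModMapIso 0 e.symm.toModuleIso _⟩⟩

theorem isGCPerfect_extMod_coker_and_nonempty_iso [IsNoetherian R C] {X : ℕ → ModuleCat.{u} R}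
    (hX : ∀ n, IsTotallyCReflexive R C (X n)) {d : ∀ n, X (n + 1) →ₗ[R] X n}
    (hd : ∀ n, Function.Exact (d (n + 1)) (d n)) {k : ℕ} (hk : Function.Injective (d k))
    (hExt : ∀ n ≤ k, IsZero (extMod R n (moduleCoker (d 0)) (ModuleCat.of R C))) :
    IsGCPerfect R C (extMod R (k + 1) (moduleCoker (d 0)) (ModuleCat.of R C)) (k + 1) ∧
      Nonempty (moduleCoker (d 0) ≅ extMod R (k + 1)
        (extMod R (k + 1) (moduleCoker (d 0)) (ModuleCat.of R C)) (ModuleCat.of R C)) := by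
  have hX' (n : ℕ) := (hX n).isHomAcyclic
  let Y (n : ℕ) : ModuleCat.{u} R := ModuleCat.of R (X n →ₗ[R] C)
  let δ (n : ℕ) : Y n →ₗ[R] Y (n + 1) := LinearMap.lcomp R C (d n)
  have hY (n : ℕ) : IsTotallyCReflexive R C (Y n) := (hX n).dual
  have hδ₀ : Function.Injective (δ 0) := isZero_extMod_zero_coker_iff.1 (hExt 0 k.zero_le)
  have hδ : ∀ j < k, Function.Exact (δ j) (δ (j + 1)) := fun j hj ↦
    exact_lcomp_of_isZero_extMod hX' hd (hExt (j + 1) hj)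
  have hδk : Function.Injective (LinearMap.lcomp R C (δ k)) :=
    (hX _).injective_lcomp_lcomp (hX _) hk
  have hδ' : ∀ j < k,
      Function.Exact (LinearMap.lcomp R C (δ (j + 1))) (LinearMap.lcomp R C (δ j)) :=
    fun j _ ↦ (hX _).exact_lcomp_lcomp (hX _) (hX _) (hd j)
  let e : extMod R (k + 1) (moduleCoker (d 0)) (ModuleCat.of R C) ≅ moduleCoker (δ k) :=
    extModCokerZeroIso hX' hd k ≪≫ extModOneCokerIso hk (hX' k)
  exact ⟨(isGCPerfect_coker hY hδ₀ hδ hδk hδ').of_iso e.symm,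
    ⟨((hX 1).cokerEquivBidual (hX 0) (d 0)).toModuleIso ≪≫ (extModCokerIso hY hδ₀ hδ).symm ≪≫
      extModMapIso (k + 1) e.symm _⟩⟩

end Duality

theorem stmt19_general (C : Type u) [AddCommGroup C] [Module R C] [IsNoetherian R C]
    (M : ModuleCat.{u} R) (g : ℕ) (hM : IsGCPerfect R C M g) :
    Module.Finite R (extMod R g M (ModuleCat.of R C)) ∧
    IsGCPerfect R C (extMod R g M (ModuleCat.of R C)) g ∧
    Nonempty (M ≅ extMod R g (extMod R g M (ModuleCat.of R C)) (ModuleCat.of R C)) := by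
  suffices h : IsGCPerfect R C (extMod R g M (ModuleCat.of R C)) g ∧
      Nonempty (M ≅ extMod R g (extMod R g M (ModuleCat.of R C)) (ModuleCat.of R C)) from
    ⟨h.1.1.finite, h⟩
  cases g with
  | zero =>
    have h := (isGCPerfect_zero_iff.1 hM).extMod_zero_and_nonempty_iso
    exact ⟨isGCPerfect_zero_iff.2 h.1, h.2⟩
  | succ k =>
    obtain ⟨X, d, hX, hd, hk, ⟨e⟩⟩ := hM.1.exists_iso_coker
    have hExt (n : ℕ) (hn : n ≤ k) : IsZero (extMod R n (moduleCoker (d 0)) (ModuleCat.of R C)) :=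
      (hM.of_iso e.symm).2 n (by omega)
    obtain ⟨hperf, ⟨e'⟩⟩ := isGCPerfect_extMod_coker_and_nonempty_iso hX hd hk hExt
    let eExt := extModMapIso (k + 1) e (ModuleCat.of R C)
    exact ⟨hperf.of_iso eExt, ⟨e.symm ≪≫ e' ≪≫ extModMapIso (k + 1) eExt _⟩⟩

/-- Let `R` be a commutative noetherian ring, `C` a semidualizing
`R`-module, and `M` a nonzero finitely generated `R`-module that is `G_C`-perfect of
grade `g`. Then `Ext^g_R(M, C)` is a finitely generated `R`-module that is
`G_C`-perfect of grade `g`, and `M ≅ Ext^g_R(Ext^g_R(M, C), C)` as `R`-modules. -/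
theorem stmt19 [IsNoetherianRing R]
    (C : Type u) [AddCommGroup C] [Module R C] (hC : IsSemidualizing R C)
    (M : Type u) [AddCommGroup M] [Module R M] [Module.Finite R M] [Nontrivial M]
    (g : ℕ) (hM : IsGCPerfect R C (ModuleCat.of R M) g) :
    Module.Finite R (extMod R g (ModuleCat.of R M) (ModuleCat.of R C)) ∧
    IsGCPerfect R C (extMod R g (ModuleCat.of R M) (ModuleCat.of R C)) g ∧
    Nonempty (ModuleCat.of R M ≅
      extMod R g (extMod R g (ModuleCat.of R M) (ModuleCat.of R C))
        (ModuleCat.of R C)) := by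
  have := hC.finite
  exact stmt19_general R C (ModuleCat.of R M) g hM
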